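/- For all positive integers n and ℓ, the number of partitions of n into (not necessarily distinct) odd parts having exactly ℓ distinct part values equals the number of partitions of n into distinct parts whose parts form exactly ℓ maximal subsequences of consecutive integers (i.e., exactly ℓ of the parts a satisfy: a+1 is not a part). -/

import Mathlib

def syG : List ℕ → List ℕ
  | [] => []
  | [x] => List.replicate x 0
  | x :: y :: M =>
    (y - (syG M).length) :: ((syG M).map Nat.succ ++ List.replicate (x - y - 1) 0)

def syRuns : List ℕ → ℕ
  | [] => 0
  | [_] => 1
  | x :: y :: M => syRuns (y :: M) + if x = y + 1 then 0 else 1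

def SyD (M : List ℕ) : Prop := M.Pairwise (· > ·) ∧ ∀ a ∈ M, 0 < a

theorem syD_tail {x : ℕ} {M : List ℕ} (h : SyD (x :: M)) : SyD M :=
  ⟨(List.pairwise_cons.1 h.1).2, fun a ha => h.2 a (List.mem_cons_of_mem _ ha)⟩

theorem syD_head {x : ℕ} {M : List ℕ} (h : SyD (x :: M)) : M.headD 0 < x := by
  cases M with
  | nil => simpa using h.2 x
  | cons y M => simpa using (List.pairwise_cons.1 h.1).1 y

theorem syG_head (M : List ℕ) (h : SyD M) :
    (M ≠ [] → (syG M).headD 0 + (syG M).length = M.headD 0) ∧ (M = [] ↔ syG M = []) ∧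
      (syG M).length ≤ M.headD 0 := by
  induction M using syG.induct with
  | case1 => simp [syG]
  | case2 x =>
    have := h.2 x (by simp)
    obtain ⟨k, rfl⟩ : ∃ k, x = k + 1 := ⟨x - 1, by omega⟩
    simp [syG, List.replicate_succ]
  | case3 x y M ih =>
    have h1 := syD_head h
    have h2 := syD_head (syD_tail h)
    obtain ⟨i1, i2, i3⟩ := ih (syD_tail (syD_tail h))
    simp [syG] at *
    omega

theorem syG_sorted (M : List ℕ) (h : SyD M) : (syG M).Pairwise (· ≥ ·) := by
  induction M using syG.induct with
  | case1 => simp [syG]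
  | case2 x => simp [syG, List.pairwise_replicate]
  | case3 x y M ih =>
    have h2 := syD_head (syD_tail h)
    have h3 := syD_tail (syD_tail h)
    have ih := ih h3
    obtain ⟨i1, i2, i3⟩ := syG_head M h3
    simp only [syG, List.pairwise_cons, List.pairwise_append, List.pairwise_map,
      List.pairwise_replicate]
    refine ⟨?_, ih.imp (by intros; omega), by simp, by simp⟩
    intro b hb
    simp only [List.mem_append, List.mem_map, List.mem_replicate] at hb
    rcases hb with ⟨c, hc, rfl⟩ | ⟨_, rfl⟩
    · have hM : M ≠ [] := by rintro rfl; simp [syG] at hc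
      have hh := i1 hM
      have : c ≤ (syG M).headD 0 := by
        generalize syG M = L at *
        cases L with
        | nil => simp at hc
        | cons d L =>
          simp at hc ⊢
          rcases hc with rfl | hc
          · rfl
          · exact (List.pairwise_cons.1 ih).1 _ hc
      omega
    · omega

theorem sy_sum_aux (L : List ℕ) (k : ℕ) :
    ((L.map Nat.succ ++ List.replicate k 0).map (fun a => 2 * a + 1)).sum =
      (L.map (fun a => 2 * a + 1)).sum + 2 * L.length + k := by
  induction L with
  | nil => simp
  | cons a L ih => simp at *; omega

theorem syG_sum (M : List ℕ) (h : SyD M) :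
    ((syG M).map (fun a => 2 * a + 1)).sum = M.sum := by
  induction M using syG.induct with
  | case1 => simp [syG]
  | case2 x => simp [syG]
  | case3 x y M ih =>
    have h1 := syD_head h
    have h2 := syD_head (syD_tail h)
    have h3 := syD_tail (syD_tail h)
    have ih := ih h3
    obtain ⟨i1, i2, i3⟩ := syG_head M h3
    rw [syG, List.map_cons, List.sum_cons, sy_sum_aux, ih]
    simp at *
    omega

theorem syG_card (M : List ℕ) (h : SyD M) : (syG M).toFinset.card = syRuns M := by
  induction M using syG.induct with
  | case1 => simp [syG, syRuns]
  | case2 x =>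
    have := h.2 x (by simp)
    simp [syG, syRuns, List.toFinset_replicate_of_ne_zero this.ne']
  | case3 x y M ih =>
    have hs := syG_sorted _ h
    have h1 := syD_head h
    have h2 := syD_head (syD_tail h)
    have h3 := syD_tail (syD_tail h)
    have hs3 := syG_sorted _ h3
    have ih := ih h3
    obtain ⟨i1, i2, i3⟩ := syG_head M h3
    have e1 : (syG (x :: y :: M)).toFinset =
        insert (y - (syG M).length) ((syG M).toFinset.image Nat.succ) ∪
          (if x = y + 1 then ∅ else {0}) := by
      ext b
      simp at h1
      split_ifs with hx
      · simp [syG, hx]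
      · have : x - y - 1 ≠ 0 := by omega
        simp [syG, this, or_comm]
    have e2 : y - (syG M).length ∈ (syG M).toFinset.image Nat.succ ↔
        ∃ z M', M = z :: M' ∧ y = z + 1 := by
      simp only [Finset.mem_image, List.mem_toFinset]
      constructor
      · rintro ⟨c, hc, hcy⟩
        cases M with
        | nil => simp [syG] at hc
        | cons z M' =>
          refine ⟨z, M', rfl, ?_⟩
          have hh := i1 (by simp)
          have : c ≤ (syG (z :: M')).headD 0 := by
            generalize syG (z :: M') = L at *
            cases L with
            | nil => simp at hc
            | cons d L =>
              simp at hc ⊢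
              rcases hc with rfl | hc
              · rfl
              · exact (List.pairwise_cons.1 hs3).1 _ hc
          simp at *
          omega
      · rintro ⟨z, M', rfl, rfl⟩
        have hh := i1 (by simp)
        refine ⟨(syG (z :: M')).headD 0, ?_, ?_⟩
        · have : syG (z :: M') ≠ [] := fun h0 => by simpa using i2.2 h0
          generalize syG (z :: M') = L at *
          cases L with
          | nil => simp at this
          | cons d L => simp
        · simp at *; omega
    have e3 : (insert (y - (syG M).length) ((syG M).toFinset.image Nat.succ)).card =
        syRuns (y :: M) := by
      rw [Finset.card_insert_eq_ite, Finset.card_image_of_injective _ Nat.succ_injective, ih]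
      cases M with
      | nil => simp [e2, syRuns]
      | cons z M' =>
        rw [syRuns]
        by_cases hy : y = z + 1
        · rw [if_pos (e2.2 ⟨z, M', rfl, hy⟩), if_pos hy, Nat.add_zero]
        · rw [if_neg, if_neg hy]
          rw [e2]
          rintro ⟨_, _, h5, h6⟩
          simp at h5
          omega
    rw [e1, syRuns]
    split_ifs with hx
    · simp [e3]
    · rw [Finset.card_union_of_disjoint, e3]
      · simp
      · rw [Finset.disjoint_singleton_right, Finset.mem_insert]
        rintro (h5 | h5)
        · omega
        · simp at h5

theorem syRuns_eq (M : List ℕ) (h : SyD M) :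
    (M.toFinset.filter (fun a => a + 1 ∉ M)).card = syRuns M := by
  induction M using syRuns.induct with
  | case1 => simp [syRuns]
  | case2 x => simp [syRuns, Finset.filter_singleton]
  | case3 x y M ih =>
    have ht := syD_tail h
    have h1 : y < x := syD_head h
    have hm : ∀ a ∈ y :: M, a ≤ y := by
      intro a ha
      rcases List.mem_cons.1 ha with rfl | ha
      · rfl
      · exact ((List.pairwise_cons.1 ht.1).1 a ha).le
    rw [syRuns, ← ih ht]
    by_cases hx : x = y + 1
    · have : ((x :: y :: M).toFinset.filter (fun a => a + 1 ∉ x :: y :: M)) =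
        insert x (((y :: M).toFinset.filter (fun a => a + 1 ∉ y :: M)).erase y) := by
        ext a
        have := hm a
        have := hm (a + 1)
        simp only [Finset.mem_filter, List.mem_toFinset, Finset.mem_insert, Finset.mem_erase,
          List.mem_cons (a := x) (l := y :: M), List.mem_cons (b := x) (l := y :: M)] at *
        grind [List.mem_toFinset]
      rw [this, Finset.card_insert_of_notMem, Finset.card_erase_of_mem]
      · have : 0 < ((y :: M).toFinset.filter (fun a => a + 1 ∉ y :: M)).card := by
          apply Finset.card_pos.2
          refine ⟨y, ?_⟩
          have := hm (y + 1)
          grind [List.mem_toFinset]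
        rw [if_pos hx]; omega
      · have := hm (y + 1)
        grind [List.mem_toFinset]
      · have := hm x
        grind [List.mem_toFinset]
    · have : ((x :: y :: M).toFinset.filter (fun a => a + 1 ∉ x :: y :: M)) =
        insert x (((y :: M).toFinset.filter (fun a => a + 1 ∉ y :: M))) := by
        ext a
        have := hm a
        have := hm (a + 1)
        grind [List.mem_toFinset]
      rw [this, Finset.card_insert_of_notMem, if_neg hx]
      have := hm x
      grind [List.mem_toFinset]

theorem syG_inj_aux (L L' : List ℕ) (k k' : ℕ)
    (h : L.map Nat.succ ++ List.replicate k 0 = L'.map Nat.succ ++ List.replicate k' 0) :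
    L = L' := by
  induction L generalizing L' with
  | nil =>
    cases L' with
    | nil => rfl
    | cons a L' => cases k <;> simp [List.replicate_succ] at h
  | cons a L ih =>
    cases L' with
    | nil => cases k' <;> simp [List.replicate_succ] at h
    | cons b L' =>
      simp at h
      rw [h.1, ih L' (by simpa using h.2)]

theorem syG_inj (M : List ℕ) (h : SyD M) : ∀ N, SyD N → syG M = syG N → M = N := by
  induction M using syG.induct with
  | case1 =>
    intro N hN e
    exact ((syG_head N hN).2.1.2 e.symm).symm
  | case2 x =>
    intro N hN e
    have hx := h.2 x (by simp)
    match N with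
    | [] => exact (syG_head _ h).2.1.2 e
    | [y] => 
      have := congrArg List.length e
      simpa [syG] using this
    | y :: z :: N => 
      have h2 := syD_head (syD_tail hN)
      obtain ⟨i1, i2, i3⟩ := syG_head N (syD_tail (syD_tail hN))
      obtain ⟨k, rfl⟩ : ∃ k, x = k + 1 := ⟨x - 1, by omega⟩
      simp [syG, List.replicate_succ] at e
      omega
  | case3 x y M ih =>
    intro N hN e
    have h2 := syD_head (syD_tail h)
    obtain ⟨i1, i2, i3⟩ := syG_head M (syD_tail (syD_tail h))
    match N with
    | [] => simp [syG] at e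
    | [z] => 
      have hx := hN.2 z (by simp)
      obtain ⟨k, rfl⟩ : ∃ k, z = k + 1 := ⟨z - 1, by omega⟩
      simp [syG, List.replicate_succ] at e
      omega
    | u :: v :: N => 
      have j2 := syD_head (syD_tail hN)
      obtain ⟨j1, _, j3⟩ := syG_head N (syD_tail (syD_tail hN))
      have k1 := (syG_head _ h).1 (by simp)
      have k2 := (syG_head _ hN).1 (by simp)
      rw [e, k2] at k1
      simp only [syG, List.cons.injEq] at e
      have e2 := syG_inj_aux _ _ _ _ e.2
      have := ih (syD_tail (syD_tail h)) N (syD_tail (syD_tail hN)) e2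
      subst this
      simp at k1
      have : y = v := by omega
      simp [k1, this]

theorem syD_sort {n : ℕ} (p : n.Partition) (h : p.parts.Nodup) :
    SyD (p.parts.sort (· ≥ ·)) := by
  constructor
  · have h1 := p.parts.pairwise_sort (· ≥ ·)
    have h2 : (p.parts.sort (· ≥ ·)).Nodup := by
      rw [← Multiset.coe_nodup, Multiset.sort_eq]; exact h
    exact (h1.and h2).imp (fun h => lt_of_le_of_ne h.1 h.2.symm)
  · intro a ha
    exact p.parts_pos (by simpa using ha)

open Classical in
noncomputable def syP {n : ℕ} (p : n.Partition) : n.Partition :=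
  if h : p.parts.Nodup then
    { parts := ((syG (p.parts.sort (· ≥ ·))).map (fun a => 2 * a + 1) : List ℕ)
      parts_pos := by
        intro i hi
        simp at hi
        omega
      parts_sum := by
        rw [Multiset.sum_coe, syG_sum _ (syD_sort p h), ← Multiset.sum_coe, Multiset.sort_eq]
        exact p.parts_sum }
  else p

theorem syP_parts {n : ℕ} (p : n.Partition) (h : p.parts.Nodup) :
    (syP p).parts = ((syG (p.parts.sort (· ≥ ·))).map (fun a => 2 * a + 1) : List ℕ) := by
  simp [syP, h]

theorem syP_inj {n : ℕ} (p q : n.Partition) (hp : p.parts.Nodup) (hq : q.parts.Nodup)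
    (h : syP p = syP q) : p = q := by
  have h1 := congrArg Nat.Partition.parts h
  rw [syP_parts p hp, syP_parts q hq, ← Multiset.map_coe, ← Multiset.map_coe] at h1
  have h2 := Multiset.map_injective (fun a b (h : 2 * a + 1 = 2 * b + 1) => by omega) h1
  have h3 := (Multiset.coe_eq_coe.1 h2).eq_of_pairwise' (syG_sorted _ (syD_sort p hp))
    (syG_sorted _ (syD_sort q hq))
  have h4 := syG_inj _ (syD_sort p hp) _ (syD_sort q hq) h3
  apply Nat.Partition.ext
  rw [← p.parts.sort_eq (· ≥ ·), h4, Multiset.sort_eq]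

theorem syP_odd {n : ℕ} (p : n.Partition) (hp : p.parts.Nodup) :
    ∀ a ∈ (syP p).parts, Odd a := by
  intro a ha
  rw [syP_parts p hp] at ha
  simp at ha
  obtain ⟨b, _, rfl⟩ := ha
  exact odd_two_mul_add_one b

theorem syP_card {n : ℕ} (p : n.Partition) (hp : p.parts.Nodup) :
    (syP p).parts.toFinset.card =
      (p.parts.toFinset.filter (fun a => a + 1 ∉ p.parts)).card := by
  have h1 : (syP p).parts.toFinset =
      (syG (p.parts.sort (· ≥ ·))).toFinset.image (fun a => 2 * a + 1) := by
    rw [syP_parts p hp]; ext; simp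
  rw [h1, Finset.card_image_of_injective _ (fun a b (h : 2 * a + 1 = 2 * b + 1) => by omega),
    syG_card _ (syD_sort p hp), ← syRuns_eq _ (syD_sort p hp)]
  congr 1
  ext; simp

/-- **Sylvester's stratification of Euler's theorem.**  The number of partitions of `n` into
odd parts having exactly `ℓ` distinct part values equals the number of partitions of `n` into
distinct parts whose parts form exactly `ℓ` maximal runs of consecutive integers. -/
theorem sylvester_stratification (n ℓ : ℕ) (hn : 0 < n) (hℓ : 0 < ℓ) :
    Nat.card {p : n.Partition //
        (∀ a ∈ p.parts, Odd a) ∧ p.parts.toFinset.card = ℓ} =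
    Nat.card {p : n.Partition //
        p.parts.Nodup ∧
        (p.parts.toFinset.filter (fun a => a + 1 ∉ p.parts)).card = ℓ} := by
  have key : (Nat.Partition.distincts n).image syP = Nat.Partition.odds n := by
    apply Finset.eq_of_subset_of_card_le
    · intro q hq
      obtain ⟨p, hp, rfl⟩ := Finset.mem_image.1 hq
      simp [Nat.Partition.distincts] at hp
      have := syP_odd p hp
      simpa [Nat.Partition.odds, Nat.Partition.restricted] using this
    · rw [Finset.card_image_of_injOn]
      · exact (Nat.Partition.card_odds_eq_card_distincts n).le
      · intro p hp q hq h
        simp [Nat.Partition.distincts] at hp hq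
        exact syP_inj p q hp hq h
  symm
  refine Nat.card_congr (Equiv.ofBijective
    (fun p => ⟨syP p.1, syP_odd p.1 p.2.1, (syP_card p.1 p.2.1).trans p.2.2⟩) ⟨?_, ?_⟩)
  · rintro ⟨p, hp⟩ ⟨q, hq⟩ h
    exact Subtype.ext (syP_inj p q hp.1 hq.1 (congrArg Subtype.val h))
  · rintro ⟨q, hq1, hq2⟩
    have : q ∈ (Nat.Partition.distincts n).image syP := by
      rw [key]
      simpa [Nat.Partition.odds, Nat.Partition.restricted] using hq1
    obtain ⟨p, hp, rfl⟩ := Finset.mem_image.1 this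
    simp [Nat.Partition.distincts] at hp
    exact ⟨⟨p, hp, (syP_card p hp).symm.trans hq2⟩, rfl⟩
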